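/- Let λ and λ' be ordered weight vectors with λ1 > 1/2 and λ1' > 1/2. If λ1 ≥ λ1', (1−2λ2)·(λ3'+λ4') ≥ (1−2λ2')·(λ3+λ4), and (1−2λ2−2λ3)·λ4' ≥ (1−2λ2'−2λ3')·λ4, then ρ_BD(λ) can be transformed to ρ_BD(λ') by SLOCC. -/

import Mathlib

open Matrix Complex
open scoped Kronecker ComplexOrder

noncomputable section
namespace Paper

abbrev Q2 := Fin 2 × Fin 2
abbrev M4 := Matrix Q2 Q2 ℂ
abbrev M16 := Matrix (Q2 × Q2) (Q2 × Q2) ℂ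

/-- `1/√2` as a complex number. -/
def invSqrt2 : ℂ := ((Real.sqrt 2)⁻¹ : ℝ)

/-- The four Bell states `|Φ₁⟩,…,|Φ₄⟩` as vectors in `ℂ²⊗ℂ²`
(product basis indexed by `Fin 2 × Fin 2`). -/
def bell : Fin 4 → Q2 → ℂ :=
  ![fun p => !![invSqrt2, 0; 0, invSqrt2] p.1 p.2,
    fun p => !![invSqrt2, 0; 0, -invSqrt2] p.1 p.2,
    fun p => !![0, invSqrt2; invSqrt2, 0] p.1 p.2,
    fun p => !![0, invSqrt2; -invSqrt2, 0] p.1 p.2]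

/-- The Bell projectors `Π_i = |Φ_i⟩⟨Φ_i|`. -/
def BellProj (i : Fin 4) : M4 := vecMulVec (bell i) (star (bell i))

/-- The Pauli matrices `σ_x, σ_y, σ_z`. -/
def pauli : Fin 3 → Matrix (Fin 2) (Fin 2) ℂ :=
  ![!![0, 1; 1, 0], !![0, -I; I, 0], !![1, 0; 0, -1]]

/-- Reindexing `((a',b'),(a'',b'')) ↦ ((a',a''),(b',b''))`. -/
def swapMid : (Q2 × Q2) ≃ (Q2 × Q2) where
  toFun p := ((p.1.1, p.2.1), (p.1.2, p.2.2))
  invFun p := ((p.1.1, p.2.1), (p.1.2, p.2.2))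
  left_inv _ := rfl
  right_inv _ := rfl

/-- The rank-one matrix `x x†`. -/
def pureMat {d : Type*} (x : d → ℂ) : Matrix d d ℂ := vecMulVec x (star x)

/-- Separability of a 16×16 four-qubit matrix (qubit order A',B',A'',B'')
across the partition A = (A',A''), B = (B',B''). -/
def SepAB (ρ : M16) : Prop :=
  ∃ (n : ℕ) (x y : Fin n → Q2 → ℂ),
    (Matrix.reindex swapMid swapMid ρ) = ∑ k, (pureMat (x k)) ⊗ₖ (pureMat (y k))


/-- `ρ` can be transformed to `ρ'` by SLOCC: `ρ' = c·Σ_k (A_k⊗B_k) ρ (A_k⊗B_k)†`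
for finitely many local Kraus pairs and some `c > 0`. -/
def SLOCCto (ρ ρ' : M4) : Prop :=
  ∃ (N : ℕ) (A B : Fin N → Matrix (Fin 2) (Fin 2) ℂ) (c : ℝ),
    0 < c ∧ ρ' = (c : ℂ) • ∑ k, (A k ⊗ₖ B k) * ρ * (A k ⊗ₖ B k)ᴴ

/-- `ρ` and `ρ'` are SLOCC equivalent. -/
def SLOCCequiv (ρ ρ' : M4) : Prop := SLOCCto ρ ρ' ∧ SLOCCto ρ' ρ

/-- The Bell-diagonal state with weight vector `l`. -/
def rhoBD (l : Fin 4 → ℝ) : M4 := ∑ i, (l i : ℂ) • BellProj i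

/-- `l` is a weight vector: nonnegative entries summing to `1`. -/
def IsWeight (l : Fin 4 → ℝ) : Prop := (∀ i, 0 ≤ l i) ∧ ∑ i, l i = 1

/-- `l` is ordered: `λ₁ ≥ λ₂ ≥ λ₃ ≥ λ₄`. -/
def IsOrdered (l : Fin 4 → ℝ) : Prop := l 1 ≤ l 0 ∧ l 2 ≤ l 1 ∧ l 3 ≤ l 2

/-- A two-qubit density matrix. -/
def IsDensity (ρ : M4) : Prop := ρ.PosSemidef ∧ ρ.trace = 1

/-- Separability of a two-qubit matrix. -/
def Sep2 (ρ : M4) : Prop :=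
  ∃ (N : ℕ) (x y : Fin N → Fin 2 → ℂ),
    ρ = ∑ k, (pureMat (x k)) ⊗ₖ (pureMat (y k))

/-!
Put `δ = λ₁ - λ₂ - λ₃ - λ₄ = 2λ₁ - 1`. Then `E₂ = 2 + δ / (λ₃ + λ₄)` and `E₃ = 2 + δ / λ₄`, while
`E₁` is an increasing function of `δ / (λ₂ + λ₃ + λ₄)`. So the three monotone conditions compare the
tail sums of `(λ₂, λ₃, λ₄) / δ` with those of the primed triple: this is weak majorization.

At a fixed `δ`, the triples `(λ₂, λ₃, λ₄)` reachable from a given entangled state form a convex set.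
It is invariant under permutations, since local unitaries permute the Bell states, and it is upward
closed, since adding the separable matrix `Π₁ + Πᵢ` raises `λᵢ` without changing `δ`. A hyperplane
separation together with the rearrangement inequality shows that such a set contains every
decreasing triple whose tail sums dominate those of one of its members.
-/

section WeakMajorization

variable {n : ℕ}

lemma sum_mul_nonneg_of_sum_Ici_nonneg {c x : Fin n → ℝ} (hc : 0 ≤ c) (hmono : Monotone c)
    (hx : ∀ k, 0 ≤ ∑ i ∈ Finset.Ici k, x i) : 0 ≤ ∑ i, c i * x i := by
  induction n with
  | zero => simp
  | succ n ih =>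
    have htail : 0 ≤ ∑ i : Fin n, (c i.succ - c 0) * x i.succ :=
      ih (c := fun i ↦ c i.succ - c 0) (x := fun i ↦ x i.succ)
        (fun i ↦ sub_nonneg.2 (hmono (Fin.zero_le _)))
        (fun i j hij ↦ sub_le_sub_right (hmono (Fin.succ_le_succ_iff.2 hij)) _)
        fun k ↦ by simpa [← Fin.map_succEmb_Ici] using hx k.succ
    have hsum : 0 ≤ ∑ i, x i := by simpa using hx 0
    calc 0 ≤ c 0 * ∑ i, x i + ∑ i : Fin n, (c i.succ - c 0) * x i.succ :=
          add_nonneg (mul_nonneg (hc 0) hsum) htail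
      _ = ∑ i, c i * x i := by
          simp only [Fin.sum_univ_succ, sub_mul, Finset.sum_sub_distrib, ← Finset.mul_sum]
          ring

lemma exists_perm_sum_mul_comp_le {c v w : Fin n → ℝ} (hc : 0 ≤ c) (hw : Antitone w)
    (h : ∀ k, ∑ i ∈ Finset.Ici k, v i ≤ ∑ i ∈ Finset.Ici k, w i) :
    ∃ σ : Equiv.Perm (Fin n), ∑ i, c i * v (σ i) ≤ ∑ i, c i * w i := by
  set σ := Tuple.sort c
  have hmono : Monotone (c ∘ σ) := Tuple.monotone_sort c
  have habel : ∑ i, c (σ i) * v i ≤ ∑ i, c (σ i) * w i := by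
    rw [← sub_nonneg, ← Finset.sum_sub_distrib]
    simp only [← mul_sub]
    exact sum_mul_nonneg_of_sum_Ici_nonneg (fun i ↦ hc (σ i)) hmono
      fun k ↦ by simpa [Finset.sum_sub_distrib] using h k
  refine ⟨σ⁻¹, ?_⟩
  calc ∑ i, c i * v (σ⁻¹ i) = ∑ i, c (σ i) * v i := by
        rw [← Equiv.sum_comp σ]; simp
    _ ≤ ∑ i, c (σ i) * w i := habel
    _ ≤ ∑ i, (c ∘ σ) (σ⁻¹ i) * w i := (hmono.antivary hw).sum_mul_le_sum_comp_perm_mul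
    _ = ∑ i, c i * w i := by simp

lemma nonpos_of_bddBelow_image_Iic {E : Type*} [AddCommGroup E] [PartialOrder E]
    [IsOrderedAddMonoid E] [Module ℝ E] [PosSMulMono ℝ E] {f : E →ₗ[ℝ] ℝ} {w : E}
    (hf : BddBelow (f '' Set.Iic w)) {x : E} (hx : 0 ≤ x) : f x ≤ 0 := by
  obtain ⟨b, hb⟩ := hf
  by_contra! hpos
  obtain ⟨m, hm⟩ := exists_nat_gt ((f w - b) / f x)
  have hmem : w - (m : ℝ) • x ∈ Set.Iic w :=
    sub_le_self w (smul_nonneg m.cast_nonneg hx)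
  have hlow : b ≤ f w - m * f x := by simpa using hb (Set.mem_image_of_mem f hmem)
  rw [div_lt_iff₀ hpos] at hm
  linarith

theorem mem_of_antitone_of_sum_Ici_le {S : Set (Fin n → ℝ)} (hconv : Convex ℝ S)
    (hupper : IsUpperSet S) (hperm : ∀ v ∈ S, ∀ σ : Equiv.Perm (Fin n), v ∘ σ ∈ S)
    {v w : Fin n → ℝ} (hv : v ∈ S) (hw : Antitone w)
    (h : ∀ k, ∑ i ∈ Finset.Ici k, v i ≤ ∑ i ∈ Finset.Ici k, w i) : w ∈ S := by
  by_contra hwS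
  set K := convexHull ℝ (Set.range fun σ : Equiv.Perm (Fin n) ↦ v ∘ σ)
  have hKS : K ⊆ S := convexHull_min (Set.range_subset_iff.2 (hperm v hv)) hconv
  have hdisj : Disjoint K (Set.Iic w) :=
    Set.disjoint_left.2 fun x hxK hxw ↦ hwS (hupper hxw (hKS hxK))
  obtain ⟨f, a, b, hfK, hab, hfw⟩ := geometric_hahn_banach_compact_closed
    (convex_convexHull ℝ _) ((Set.finite_range _).isCompact_convexHull ℝ)
    (convex_Iic w) isClosed_Iic hdisj
  have hbdd : BddBelow ((f : (Fin n → ℝ) →ₗ[ℝ] ℝ) '' Set.Iic w) :=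
    ⟨b, Set.forall_mem_image.2 fun x hx ↦ (hfw x hx).le⟩
  have hc : 0 ≤ fun i ↦ -f (Pi.single i 1) := fun i ↦
    neg_nonneg.2 (nonpos_of_bddBelow_image_Iic hbdd (Pi.single_nonneg.2 zero_le_one))
  obtain ⟨σ, hσ⟩ := exists_perm_sum_mul_comp_le hc hw h
  have hf (x : Fin n → ℝ) : ∑ i, -f (Pi.single i 1) * x i = -f x := by
    conv_rhs => rw [pi_eq_sum_univ' x]
    simp [mul_comm]
  have hle : f w ≤ f (v ∘ σ) := neg_le_neg_iff.1 (hf w ▸ hf (v ∘ σ) ▸ hσ)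
  linarith [hfK _ (subset_convexHull ℝ _ ⟨σ, rfl⟩), hfw w Set.self_mem_Iic]

end WeakMajorization

section LocalKrausCone

variable {m n : Type*} [Fintype m] [Fintype n]

/-- The cone of all unnormalised states `∑ₖ (Aₖ ⊗ Bₖ) ρ (Aₖ ⊗ Bₖ)†` obtained from `ρ` by finitely
many local Kraus pairs. A positive factor in front can be absorbed into the `Aₖ`. -/
def localKrausCone (ρ : Matrix (m × n) (m × n) ℂ) : PointedCone ℝ (Matrix (m × n) (m × n) ℂ) where
  carrier := {σ | ∃ (N : ℕ) (A : Fin N → Matrix m m ℂ) (B : Fin N → Matrix n n ℂ),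
    σ = ∑ k, (A k ⊗ₖ B k) * ρ * (A k ⊗ₖ B k)ᴴ}
  zero_mem' := ⟨0, 0, 0, by simp⟩
  add_mem' := by
    rintro _ _ ⟨N, A, B, rfl⟩ ⟨N', A', B', rfl⟩
    exact ⟨N + N', Fin.append A A', Fin.append B B', by simp [Fin.sum_univ_add]⟩
  smul_mem' := by
    rintro ⟨t, ht⟩ _ ⟨N, A, B, rfl⟩
    refine ⟨N, fun k ↦ √t • A k, B, ?_⟩
    simp [smul_kronecker, conjTranspose_smul, smul_smul, Real.mul_self_sqrt ht, Finset.smul_sum,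
      Nonneg.mk_smul]

variable {ρ σ : Matrix (m × n) (m × n) ℂ}

lemma local_conj_mem_localKrausCone (A : Matrix m m ℂ) (B : Matrix n n ℂ)
    (hσ : σ ∈ localKrausCone ρ) : (A ⊗ₖ B) * σ * (A ⊗ₖ B)ᴴ ∈ localKrausCone ρ := by
  obtain ⟨N, C, D, rfl⟩ := hσ
  refine ⟨N, fun k ↦ A * C k, fun k ↦ B * D k, ?_⟩
  simp only [mul_kronecker_mul, conjTranspose_mul, Matrix.mul_sum, Matrix.sum_mul,
    Matrix.mul_assoc]

lemma self_mem_localKrausCone (ρ : Matrix (m × n) (m × n) ℂ) : ρ ∈ localKrausCone ρ := by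
  classical
  exact ⟨1, fun _ ↦ 1, fun _ ↦ 1, by simp⟩

lemma local_conj_vecMulVec_single [DecidableEq m] [DecidableEq n] (x : m → ℂ) (y : n → ℂ)
    (ρ : Matrix (m × n) (m × n) ℂ) (i : m) (j : n) :
    (vecMulVec x (Pi.single i 1) ⊗ₖ vecMulVec y (Pi.single j 1)) * ρ *
        (vecMulVec x (Pi.single i 1) ⊗ₖ vecMulVec y (Pi.single j 1))ᴴ =
      ρ (i, j) (i, j) • (pureMat x ⊗ₖ pureMat y) := by
  ext ⟨a, b⟩ ⟨a', b'⟩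
  simp only [Matrix.mul_apply, kroneckerMap_apply, vecMulVec_apply, Pi.single_apply, apply_ite,
    mul_one, mul_zero, ite_mul, zero_mul, Fintype.sum_prod_type, Finset.sum_ite_eq',
    Finset.mem_univ, ↓reduceIte, conjTranspose_apply, star_mul', star_zero, pureMat,
    Matrix.smul_apply, Pi.star_apply, smul_eq_mul]
  ring

lemma kronecker_pureMat_mem_localKrausCone {i : m} {j : n} {r : ℝ} (hr : 0 < r)
    (hρ : ρ (i, j) (i, j) = r) (x : m → ℂ) (y : n → ℂ) :
    pureMat x ⊗ₖ pureMat y ∈ localKrausCone ρ := by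
  classical
  have hmem := local_conj_mem_localKrausCone (vecMulVec x (Pi.single i 1))
    (vecMulVec y (Pi.single j 1)) (self_mem_localKrausCone ρ)
  rw [local_conj_vecMulVec_single, hρ, Complex.coe_smul] at hmem
  simpa [smul_smul, hr.ne'] using (localKrausCone ρ).smul_mem (inv_nonneg.2 hr.le) hmem

end LocalKrausCone

lemma SLOCCto.of_mem_localKrausCone {ρ σ : M4} (hσ : σ ∈ localKrausCone ρ) : SLOCCto ρ σ := by
  obtain ⟨N, A, B, rfl⟩ := hσ
  exact ⟨N, A, B, 1, one_pos, by simp⟩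

lemma Sep2.mem_localKrausCone {ρ σ : M4} (hσ : Sep2 σ) {p : Q2} {r : ℝ} (hr : 0 < r)
    (hρ : ρ p p = r) : σ ∈ localKrausCone ρ := by
  obtain ⟨N, x, y, rfl⟩ := hσ
  exact sum_mem fun k _ ↦ kronecker_pureMat_mem_localKrausCone hr hρ (x k) (y k)

lemma invSqrt2_mul_self : invSqrt2 * invSqrt2 = 1 / 2 := by
  rw [invSqrt2, ← Complex.ofReal_mul, ← mul_inv, Real.mul_self_sqrt zero_le_two]
  norm_num

lemma star_invSqrt2 : star invSqrt2 = invSqrt2 := Complex.conj_ofReal _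

lemma mul_pureMat_mul_conjTranspose {m n : Type*} [Fintype n] {M : Matrix m n ℂ} {x : n → ℂ}
    {y : m → ℂ} {z : ℂ} (hz : z * star z = 1) (hM : M *ᵥ x = z • y) :
    M * pureMat x * Mᴴ = pureMat y := by
  rw [pureMat, mul_vecMulVec, vecMulVec_mul, ← star_mulVec, hM, star_smul, smul_vecMulVec,
    vecMulVec_smul, smul_smul, hz, one_smul, pureMat]

lemma kronecker_phase_mulVec_bell (i : Fin 4) :
    (!![1, 0; 0, I] ⊗ₖ !![1, 0; 0, I]) *ᵥ bell i =
      (![1, 1, I, I] : Fin 4 → ℂ) i • bell (Equiv.swap 0 1 i) := by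
  ext ⟨a, b⟩
  fin_cases i <;> fin_cases a <;> fin_cases b <;>
    simp [mulVec, dotProduct, Fintype.sum_prod_type, bell, Equiv.swap_apply_def]

lemma kronecker_hadamard_mulVec_bell (i : Fin 4) :
    ((invSqrt2 • !![1, 1; 1, -1]) ⊗ₖ (invSqrt2 • !![1, 1; 1, -1])) *ᵥ bell i =
      (![1, 1, 1, -1] : Fin 4 → ℂ) i • bell (Equiv.swap 1 2 i) := by
  rw [smul_kronecker, kronecker_smul, smul_smul, invSqrt2_mul_self]
  ext ⟨a, b⟩
  fin_cases i <;> fin_cases a <;> fin_cases b <;>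
    simp [mulVec, dotProduct, Fintype.sum_prod_type, bell, Equiv.swap_apply_def] <;> ring

lemma kronecker_conj_phase_mulVec_bell (i : Fin 4) :
    (!![1, 0; 0, I] ⊗ₖ !![1, 0; 0, -I]) *ᵥ bell i =
      (![1, 1, -I, -I] : Fin 4 → ℂ) i • bell (Equiv.swap 2 3 i) := by
  ext ⟨a, b⟩
  fin_cases i <;> fin_cases a <;> fin_cases b <;>
    simp [mulVec, dotProduct, Fintype.sum_prod_type, bell, Equiv.swap_apply_def]

lemma exists_local_conj_bellProj_swap (k : Fin 3) : ∃ U V : Matrix (Fin 2) (Fin 2) ℂ, ∀ i,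
    (U ⊗ₖ V) * BellProj i * (U ⊗ₖ V)ᴴ = BellProj (Equiv.swap k.castSucc k.succ i) := by
  fin_cases k
  · refine ⟨_, _, fun i ↦ mul_pureMat_mul_conjTranspose ?_ (kronecker_phase_mulVec_bell i)⟩
    fin_cases i <;> simp
  · refine ⟨_, _, fun i ↦ mul_pureMat_mul_conjTranspose ?_ (kronecker_hadamard_mulVec_bell i)⟩
    fin_cases i <;> simp
  · refine ⟨_, _, fun i ↦ mul_pureMat_mul_conjTranspose ?_ (kronecker_conj_phase_mulVec_bell i)⟩
    fin_cases i <;> simp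

theorem exists_local_conj_bellProj_perm (σ : Equiv.Perm (Fin 4)) :
    ∃ U V : Matrix (Fin 2) (Fin 2) ℂ, ∀ i,
      (U ⊗ₖ V) * BellProj i * (U ⊗ₖ V)ᴴ = BellProj (σ i) := by
  have hσ : σ ∈ Submonoid.closure
      (Set.range fun k : Fin 3 ↦ Equiv.swap k.castSucc k.succ) := by
    simp [Equiv.Perm.mclosure_swap_castSucc_succ]
  induction hσ using Submonoid.closure_induction with
  | mem σ hσ =>
    obtain ⟨k, rfl⟩ := hσ
    exact exists_local_conj_bellProj_swap k
  | one => exact ⟨1, 1, by simp⟩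
  | mul σ τ _ _ hσ hτ =>
    obtain ⟨U, V, hUV⟩ := hσ
    obtain ⟨U', V', hUV'⟩ := hτ
    refine ⟨U * U', V * V', fun i ↦ ?_⟩
    rw [mul_kronecker_mul, conjTranspose_mul, Equiv.Perm.mul_apply, ← hUV, ← hUV']
    simp only [Matrix.mul_assoc]

lemma rhoBD_eq_linearCombination (l : Fin 4 → ℝ) :
    rhoBD l = Fintype.linearCombination ℝ BellProj l := by
  simp [rhoBD, Fintype.linearCombination_apply]

lemma rhoBD_apply_zero_zero (l : Fin 4 → ℝ) :
    rhoBD l (0, 0) (0, 0) = ((l 0 + l 1) / 2 : ℝ) := by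
  have hbell (i : Fin 4) : BellProj i (0, 0) (0, 0) = (![1 / 2, 1 / 2, 0, 0] : Fin 4 → ℂ) i := by
    fin_cases i <;> simp [BellProj, vecMulVec_apply, bell, star_invSqrt2, invSqrt2_mul_self]
  simp [rhoBD, Fin.sum_univ_four, hbell, add_mul, div_eq_mul_inv]

lemma sep2_rhoBD_single_add_single : Sep2 (rhoBD (Pi.single 0 1 + Pi.single 1 1)) := by
  refine ⟨2, fun k ↦ Pi.single k 1, fun k ↦ Pi.single k 1, ?_⟩
  ext ⟨a, b⟩ ⟨a', b'⟩
  fin_cases a <;> fin_cases b <;> fin_cases a' <;> fin_cases b' <;>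
    simp [rhoBD, Fin.sum_univ_four, BellProj, pureMat, vecMulVec_apply, bell, star_invSqrt2,
      invSqrt2_mul_self] <;> norm_num

/-- The weight vectors, not necessarily normalised, whose Bell-diagonal matrix is obtained from `ρ`
by local Kraus pairs. -/
def reachableWeights (ρ : M4) : PointedCone ℝ (Fin 4 → ℝ) :=
  PointedCone.comap (Fintype.linearCombination ℝ BellProj) (localKrausCone ρ)

lemma mem_reachableWeights {ρ : M4} {l : Fin 4 → ℝ} :
    l ∈ reachableWeights ρ ↔ rhoBD l ∈ localKrausCone ρ := by
  rw [rhoBD_eq_linearCombination]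
  rfl

section ReachableWeights

variable {ρ : M4} {l : Fin 4 → ℝ}

lemma comp_perm_mem_reachableWeights (hl : l ∈ reachableWeights ρ) (σ : Equiv.Perm (Fin 4)) :
    l ∘ σ ∈ reachableWeights ρ := by
  rw [mem_reachableWeights] at hl ⊢
  obtain ⟨U, V, hUV⟩ := exists_local_conj_bellProj_perm σ⁻¹
  convert local_conj_mem_localKrausCone U V hl using 1
  calc rhoBD (l ∘ σ) = ∑ i, (l i : ℂ) • BellProj (σ⁻¹ i) := by
        rw [rhoBD, ← Equiv.sum_comp σ⁻¹]; simp
    _ = (U ⊗ₖ V) * rhoBD l * (U ⊗ₖ V)ᴴ := by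
        simp only [rhoBD, ← hUV, Matrix.mul_sum, Matrix.sum_mul, mul_smul_comm, smul_mul_assoc]

lemma single_zero_add_single_mem_reachableWeights (hl : 0 < l 0 + l 1) {j : Fin 4} (hj : j ≠ 0) :
    Pi.single 0 1 + Pi.single j 1 ∈ reachableWeights (rhoBD l) := by
  have hsep : Pi.single 0 1 + Pi.single 1 1 ∈ reachableWeights (rhoBD l) :=
    mem_reachableWeights.2
      (sep2_rhoBD_single_add_single.mem_localKrausCone (half_pos hl) (rhoBD_apply_zero_zero l))
  convert comp_perm_mem_reachableWeights hsep (Equiv.swap 1 j) using 1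
  ext i
  fin_cases j <;> fin_cases i <;> simp [Equiv.swap_apply_def] at hj ⊢

end ReachableWeights

section GapWeights

variable {n : ℕ}

/-- The weight vector `λ` whose first entry exceeds the sum of the remaining entries `w` by the gap
`δ`. If `λ` is normalised then `δ = 2λ₁ - 1`; for two qubits `δ > 0` means entanglement. -/
def gapWeights (δ : ℝ) (w : Fin n → ℝ) : Fin (n + 1) → ℝ := Fin.cons (δ + ∑ i, w i) w

lemma gapWeights_add (δ δ' : ℝ) (w w' : Fin n → ℝ) :
    gapWeights (δ + δ') (w + w') = gapWeights δ w + gapWeights δ' w' := by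
  ext i
  cases i using Fin.cases
  · simp [gapWeights, Finset.sum_add_distrib, add_add_add_comm]
  · simp [gapWeights]

lemma gapWeights_smul (t δ : ℝ) (w : Fin n → ℝ) :
    gapWeights (t * δ) (t • w) = t • gapWeights δ w := by
  ext i
  cases i using Fin.cases <;> simp [gapWeights, mul_add, Finset.mul_sum]

lemma gapWeights_comp_perm (δ : ℝ) (w : Fin n → ℝ) (σ : Equiv.Perm (Fin n)) :
    gapWeights δ (w ∘ σ) = gapWeights δ w ∘ Equiv.Perm.decomposeFin.symm (0, σ) := by
  ext i
  cases i using Fin.cases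
  · simp [gapWeights, Equiv.sum_comp σ w]
  · simp [gapWeights]

lemma gapWeights_tail {l : Fin (n + 1) → ℝ} (hl : ∑ i, l i = 1) :
    gapWeights (2 * l 0 - 1) (Fin.tail l) = l := by
  rw [Fin.sum_univ_succ] at hl
  ext i
  cases i using Fin.cases
  · simp only [gapWeights, Fin.cons_zero, Fin.tail]
    linarith
  · simp [gapWeights, Fin.tail]

end GapWeights

section GapReachability

variable {l : Fin 4 → ℝ}

lemma convex_setOf_gapWeights_mem (ρ : M4) (δ : ℝ) :
    Convex ℝ {w | gapWeights δ w ∈ reachableWeights ρ} := by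
  intro v hv w hw a b ha hb hab
  have hmem := add_mem ((reachableWeights ρ).smul_mem ha hv)
    ((reachableWeights ρ).smul_mem hb hw)
  rwa [← gapWeights_smul, ← gapWeights_smul, ← gapWeights_add, ← add_mul, hab, one_mul] at hmem

lemma gapWeights_zero_mem_reachableWeights (hl : 0 < l 0 + l 1) {w : Fin 3 → ℝ} (hw : 0 ≤ w) :
    gapWeights 0 w ∈ reachableWeights (rhoBD l) := by
  have hdecomp : gapWeights 0 w = ∑ i, w i • (Pi.single 0 1 + Pi.single i.succ 1) := by
    ext j
    cases j using Fin.cases <;> simp [gapWeights, Pi.single_apply, Fin.succ_ne_zero]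
  rw [hdecomp]
  exact sum_mem fun i _ ↦ (reachableWeights _).smul_mem (hw i)
    (single_zero_add_single_mem_reachableWeights hl i.succ_ne_zero)

lemma isUpperSet_setOf_gapWeights_mem (hl : 0 < l 0 + l 1) (δ : ℝ) :
    IsUpperSet {w | gapWeights δ w ∈ reachableWeights (rhoBD l)} := by
  intro v w hvw hv
  have hmem := add_mem hv
    (gapWeights_zero_mem_reachableWeights hl (sub_nonneg.2 hvw))
  rwa [← gapWeights_add, add_zero, add_sub_cancel] at hmem

theorem gapWeights_mem_reachableWeights_of_sum_Ici_le (hl : 0 < l 0 + l 1) {δ δ' : ℝ}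
    {v w : Fin 3 → ℝ} (hδ : 0 < δ) (hδ' : 0 ≤ δ')
    (hv : gapWeights δ v ∈ reachableWeights (rhoBD l)) (hw : Antitone w)
    (h : ∀ k, δ' * ∑ i ∈ Finset.Ici k, v i ≤ δ * ∑ i ∈ Finset.Ici k, w i) :
    gapWeights δ' w ∈ reachableWeights (rhoBD l) := by
  have hscaled : gapWeights δ' ((δ' / δ) • v) ∈ reachableWeights (rhoBD l) := by
    simpa [← gapWeights_smul, hδ.ne'] using
      (reachableWeights (rhoBD l)).smul_mem (div_nonneg hδ' hδ.le) hv
  refine mem_of_antitone_of_sum_Ici_le (convex_setOf_gapWeights_mem _ δ')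
    (isUpperSet_setOf_gapWeights_mem hl δ') (fun u hu σ ↦ ?_) hscaled hw fun k ↦ ?_
  · rw [Set.mem_ofPred_eq, gapWeights_comp_perm]
    exact comp_perm_mem_reachableWeights hu _
  · simp only [Pi.smul_apply, smul_eq_mul, ← Finset.mul_sum]
    rw [div_mul_eq_mul_div, div_le_iff₀' hδ]
    exact h k

end GapReachability

lemma mul_sum_Ici_tail_le {l l' : Fin 4 → ℝ} (hl : ∑ i, l i = 1) (hl' : ∑ i, l' i = 1)
    (hE1 : l' 0 ≤ l 0)
    (hE2 : (1 - 2 * l' 1) * (l 2 + l 3) ≤ (1 - 2 * l 1) * (l' 2 + l' 3))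
    (hE3 : (1 - 2 * l' 1 - 2 * l' 2) * l 3 ≤ (1 - 2 * l 1 - 2 * l 2) * l' 3) (k : Fin 3) :
    (2 * l' 0 - 1) * ∑ i ∈ Finset.Ici k, Fin.tail l i ≤
      (2 * l 0 - 1) * ∑ i ∈ Finset.Ici k, Fin.tail l' i := by
  rw [Fin.sum_univ_four] at hl hl'
  have hl0 : l 0 = 1 - l 1 - l 2 - l 3 := by linarith
  have hl0' : l' 0 = 1 - l' 1 - l' 2 - l' 3 := by linarith
  have hsum_Ici_zero (f : Fin 4 → ℝ) :
      ∑ i ∈ Finset.Ici 0, Fin.tail f i = f 1 + f 2 + f 3 := by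
    simp [Fin.sum_univ_three, Fin.tail]
  have hsum_Ici_one (f : Fin 4 → ℝ) : ∑ i ∈ Finset.Ici 1, Fin.tail f i = f 2 + f 3 := by
    simp [show Finset.Ici (1 : Fin 3) = {1, 2} from rfl, Fin.tail]
  have hsum_Ici_two (f : Fin 4 → ℝ) : ∑ i ∈ Finset.Ici 2, Fin.tail f i = f 3 := by
    simp [show Finset.Ici (2 : Fin 3) = {2} from rfl, Fin.tail]
  rw [hl0, hl0'] at hE1 ⊢
  match k with
  | 0 => rw [hsum_Ici_zero, hsum_Ici_zero]; linarith
  | 1 => rw [hsum_Ici_one, hsum_Ici_one]; linarith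
  | 2 => rw [hsum_Ici_two, hsum_Ici_two]; linarith

theorem stmt14_general (l l' : Fin 4 → ℝ) (hw : IsWeight l) (hw' : IsWeight l')
    (ho' : IsOrdered l') (h1 : 1 / 2 < l 0) (h1' : 1 / 2 < l' 0)
    (hE1 : l' 0 ≤ l 0)
    (hE2 : (1 - 2 * l' 1) * (l 2 + l 3) ≤ (1 - 2 * l 1) * (l' 2 + l' 3))
    (hE3 : (1 - 2 * l' 1 - 2 * l' 2) * l 3 ≤ (1 - 2 * l 1 - 2 * l 2) * l' 3) :
    SLOCCto (rhoBD l) (rhoBD l') := by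
  have hpos : 0 < l 0 + l 1 := by linarith [hw.1 1]
  have hself : gapWeights (2 * l 0 - 1) (Fin.tail l) ∈ reachableWeights (rhoBD l) := by
    rw [gapWeights_tail hw.2]
    exact mem_reachableWeights.2 (self_mem_localKrausCone _)
  have hanti : Antitone (Fin.tail l') :=
    Fin.antitone_iff_succ_le.2 (Fin.forall_fin_two.2 ho'.2)
  have hmem := gapWeights_mem_reachableWeights_of_sum_Ici_le hpos (by linarith) (by linarith)
    hself hanti (mul_sum_Ici_tail_le hw.2 hw'.2 hE1 hE2 hE3)
  rw [gapWeights_tail hw'.2] at hmem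
  exact SLOCCto.of_mem_localKrausCone (mem_reachableWeights.1 hmem)

/-- if two entangled ordered Bell-diagonal weight vectors satisfy the
three monotone inequalities `E_i(λ) ≥ E_i(λ')` (in cross-multiplied form), then
`ρ_BD(λ)` can be transformed to `ρ_BD(λ')` by SLOCC. -/
theorem stmt14 (l l' : Fin 4 → ℝ) (hw : IsWeight l) (hw' : IsWeight l')
    (ho : IsOrdered l) (ho' : IsOrdered l')
    (h1 : 1 / 2 < l 0) (h1' : 1 / 2 < l' 0)
    (hE1 : l' 0 ≤ l 0)
    (hE2 : (1 - 2 * l' 1) * (l 2 + l 3) ≤ (1 - 2 * l 1) * (l' 2 + l' 3))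
    (hE3 : (1 - 2 * l' 1 - 2 * l' 2) * l 3 ≤ (1 - 2 * l 1 - 2 * l 2) * l' 3) :
    SLOCCto (rhoBD l) (rhoBD l') := by
  exact stmt14_general l l' hw hw' ho' h1 h1' hE1 hE2 hE3

end Paper
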